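/- Let X ⊆ P² be a k-configuration of type (d₁,…,d_s) defined using lines L₁,…,L_s. If for some index i the line L_i satisfies |L_i ∩ X| = d_s, then d_j = d_s − s + j for every j = i, i+1, …, s. -/

import Mathlib

/-- The projective plane over a field `K`, as the projectivization of `K³`. -/
abbrev P2 (K : Type) [Field K] := Projectivization K (Fin 3 → K)

/-- A line in `P2 K`: a 2-dimensional linear subspace of `K³`. -/
structure ProjLine (K : Type) [Field K] where
  toSubmodule : Submodule K (Fin 3 → K)
  finrank_eq_two : Module.finrank K toSubmodule = 2

/-- The set of points of `P2 K` lying on a line. -/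
def ProjLine.points {K : Type} [Field K] (L : ProjLine K) : Set (P2 K) :=
  {p | p.submodule ≤ L.toSubmodule}

/-- The homogeneous prime ideal of a point of `P2 K`: the ideal generated by
the linear forms vanishing at the point. -/
noncomputable def pointIdeal {K : Type} [Field K] (p : P2 K) :
    Ideal (MvPolynomial (Fin 3) K) :=
  Ideal.span {f | f.IsHomogeneous 1 ∧ MvPolynomial.eval p.rep f = 0}

/-- The defining ideal `I_{mX} = ⋂_{P ∈ X} I_P^m` of the fat point scheme `mX`. -/
noncomputable def fatIdeal {K : Type} [Field K] (X : Set (P2 K)) (m : ℕ) :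
    Ideal (MvPolynomial (Fin 3) K) :=
  ⨅ p ∈ X, (pointIdeal p) ^ m

/-- The Hilbert function of `R/I`: `H(t) = dim_K R_t - dim_K I_t`. -/
noncomputable def hilb {K : Type} [Field K] (I : Ideal (MvPolynomial (Fin 3) K)) (t : ℕ) : ℕ :=
  Module.finrank K ↥(MvPolynomial.homogeneousSubmodule (Fin 3) K t) -
    Module.finrank K ↥(Submodule.restrictScalars K (I : Submodule (MvPolynomial (Fin 3) K) (MvPolynomial (Fin 3) K)) ⊓ MvPolynomial.homogeneousSubmodule (Fin 3) K t)

/-- The Hilbert function extended to `ℤ`, with `H(t) = 0` for `t < 0`. -/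
noncomputable def hilbZ {K : Type} [Field K] (I : Ideal (MvPolynomial (Fin 3) K)) (t : ℤ) : ℤ :=
  if t < 0 then 0 else hilb I t.toNat

/-- The first difference `ΔH(t) = H(t) - H(t-1)` of the Hilbert function. -/
noncomputable def deltaHilb {K : Type} [Field K] (I : Ideal (MvPolynomial (Fin 3) K)) (t : ℤ) : ℤ :=
  hilbZ I t - hilbZ I (t - 1)

/-- `X` is a k-configuration of type `(d 0, …, d (s-1))` defined using the subsets
`Xs 0, …, Xs (s-1)` and the (distinct) lines `Ls 0, …, Ls (s-1)`. -/
structure IsKConfig {K : Type} [Field K] {s : ℕ} (X : Set (P2 K)) (d : Fin s → ℕ)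
    (Xs : Fin s → Set (P2 K)) (Ls : Fin s → ProjLine K) : Prop where
  one_le : ∀ i, 1 ≤ d i
  strictMono : StrictMono d
  lines_distinct : Function.Injective Ls
  union_eq : X = ⋃ i, Xs i
  card_eq : ∀ i, (Xs i).ncard = d i
  subset_line : ∀ i, Xs i ⊆ (Ls i).points
  not_mem : ∀ i j : Fin s, j < i → ∀ p ∈ Xs j, p ∉ (Ls i).points

/-!
Every point of `X ∩ L_i` outside `X_i` lies on one of the `s - i` later lines, and each of these
meets `L_i` in at most one point, so `|X ∩ L_i| ≤ d_i + (s - i)`. On the other hand a strictly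
increasing sequence of integers grows by at least `s - i` between `i` and `s`. If `d_s ≤ |X ∩ L_i|`,
both estimates are equalities and every step of `d` from `i` on is exactly `1`. The `s - i` of this
1-based indexing reads `s - 1 - i` for `i : Fin s`.
-/

theorem card_Ico_le_card_Ico_of_strictMono {α β : Type*} [LinearOrder α] [LocallyFiniteOrder α]
    [Preorder β] [LocallyFiniteOrder β] {f : α → β} (hf : StrictMono f) (a b : α) :
    (Finset.Ico a b).card ≤ (Finset.Ico (f a) (f b)).card := by
  refine Finset.card_le_card_of_injOn f (fun x hx => ?_) hf.injective.injOn
  obtain ⟨hax, hxb⟩ := Finset.mem_Ico.1 hx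
  exact Finset.mem_Ico.2 ⟨hf.monotone hax, hf hxb⟩

theorem add_sub_le_of_strictMono {n : ℕ} {d : Fin n → ℕ} (hd : StrictMono d) {a b : Fin n}
    (hab : a ≤ b) : d a + ((b : ℕ) - a) ≤ d b := by
  have hcard : (b : ℕ) - a ≤ d b - d a := by
    simpa only [Fin.card_Ico, Nat.card_Ico] using card_Ico_le_card_Ico_of_strictMono hd a b
  have hmono : d a ≤ d b := hd.monotone hab
  omega

theorem add_sub_eq_of_strictMono_of_le {n : ℕ} {d : Fin n → ℕ} (hd : StrictMono d)
    {a b c : Fin n} (hab : a ≤ b) (hbc : b ≤ c) (hca : d c ≤ d a + ((c : ℕ) - a)) :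
    d b + ((c : ℕ) - b) = d c := by
  have growth_ab : d a + ((b : ℕ) - a) ≤ d b := add_sub_le_of_strictMono hd hab
  have growth_bc : d b + ((c : ℕ) - b) ≤ d c := add_sub_le_of_strictMono hd hbc
  omega

theorem finrank_inf_lt_of_finrank_eq_of_ne {K V : Type*} [DivisionRing K] [AddCommGroup V]
    [Module K V] {U W : Submodule K V} [FiniteDimensional K U] [FiniteDimensional K W]
    (hrank : Module.finrank K U = Module.finrank K W) (hne : U ≠ W) :
    Module.finrank K ↥(U ⊓ W) < Module.finrank K U :=
  Submodule.finrank_lt_finrank_of_lt <| inf_lt_left.2 fun hle =>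
    hne (Submodule.eq_of_le_of_finrank_eq hle hrank)

theorem subsingleton_setOf_submodule_le {K V : Type*} [DivisionRing K] [AddCommGroup V]
    [Module K V] {W : Submodule K V} [FiniteDimensional K W] (hW : Module.finrank K W ≤ 1) :
    {p : Projectivization K V | p.submodule ≤ W}.Subsingleton := by
  have submodule_eq {p : Projectivization K V} (hp : p.submodule ≤ W) : p.submodule = W :=
    Submodule.eq_of_le_of_finrank_le hp (hW.trans_eq p.finrank_submodule.symm)
  exact fun p hp q hq =>
    Projectivization.submodule_injective ((submodule_eq hp).trans (submodule_eq hq).symm)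

namespace ProjLine

variable {K : Type} [Field K]

theorem toSubmodule_injective : Function.Injective (toSubmodule : ProjLine K → _) := by
  rintro ⟨U, hU⟩ ⟨W, hW⟩ rfl
  rfl

theorem subsingleton_points_inter_points {L M : ProjLine K} (hLM : L ≠ M) :
    (L.points ∩ M.points).Subsingleton := by
  have hrank : Module.finrank K ↥(L.toSubmodule ⊓ M.toSubmodule) < 2 :=
    L.finrank_eq_two ▸ finrank_inf_lt_of_finrank_eq_of_ne
      (L.finrank_eq_two.trans M.finrank_eq_two.symm) (toSubmodule_injective.ne hLM)
  exact (subsingleton_setOf_submodule_le (Nat.le_of_lt_succ hrank)).anti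
    fun p ⟨hpL, hpM⟩ => (le_inf hpL hpM : p.submodule ≤ L.toSubmodule ⊓ M.toSubmodule)

end ProjLine

namespace IsKConfig

variable {K : Type} [Field K] {s : ℕ} {X : Set (P2 K)} {d : Fin s → ℕ}
  {Xs : Fin s → Set (P2 K)} {Ls : Fin s → ProjLine K}

theorem finite_part (hX : IsKConfig X d Xs Ls) (i : Fin s) : (Xs i).Finite :=
  Set.finite_of_ncard_pos ((hX.one_le i).trans_eq (hX.card_eq i).symm)

theorem inter_points_subset (hX : IsKConfig X d Xs Ls) (i : Fin s) :
    X ∩ (Ls i).points ⊆ Xs i ∪ ⋃ j ∈ Finset.Ioi i, Xs j ∩ (Ls i).points := by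
  rintro p ⟨hpX, hpL⟩
  obtain ⟨j, hpj⟩ := Set.mem_iUnion.1 (hX.union_eq ▸ hpX)
  rcases lt_trichotomy j i with hji | rfl | hij
  · exact absurd hpL (hX.not_mem i j hji p hpj)
  · exact Or.inl hpj
  · exact Or.inr (Set.mem_biUnion (Finset.mem_Ioi.2 hij) ⟨hpj, hpL⟩)

theorem ncard_part_inter_points_le_one (hX : IsKConfig X d Xs Ls) {i j : Fin s} (hij : i ≠ j) :
    (Xs j ∩ (Ls i).points).ncard ≤ 1 := by
  have hsubsingleton : (Xs j ∩ (Ls i).points).Subsingleton :=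
    (ProjLine.subsingleton_points_inter_points (hX.lines_distinct.ne hij.symm)).anti
      (Set.inter_subset_inter_left _ (hX.subset_line j))
  exact (Set.ncard_le_one hsubsingleton.finite).2 fun _ hp _ hq => hsubsingleton hp hq

theorem ncard_inter_points_le (hX : IsKConfig X d Xs Ls) (i : Fin s) :
    (X ∩ (Ls i).points).ncard ≤ d i + (s - 1 - i) := by
  have hfinite : (⋃ j ∈ Finset.Ioi i, Xs j ∩ (Ls i).points).Finite :=
    (Finset.Ioi i).finite_toSet.biUnion fun j _ => (hX.finite_part j).inter_of_left _
  have hlater : (⋃ j ∈ Finset.Ioi i, Xs j ∩ (Ls i).points).ncard ≤ s - 1 - i := calc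
    _ ≤ ∑ j ∈ Finset.Ioi i, (Xs j ∩ (Ls i).points).ncard := Finset.set_ncard_biUnion_le _ _
    _ ≤ (Finset.Ioi i).card • 1 := Finset.sum_le_card_nsmul _ _ 1 fun j hj =>
      hX.ncard_part_inter_points_le_one (Finset.mem_Ioi.1 hj).ne
    _ = s - 1 - i := by rw [smul_eq_mul, mul_one, Fin.card_Ioi]
  calc (X ∩ (Ls i).points).ncard
    _ ≤ (Xs i ∪ ⋃ j ∈ Finset.Ioi i, Xs j ∩ (Ls i).points).ncard :=
      Set.ncard_le_ncard (hX.inter_points_subset i) ((hX.finite_part i).union hfinite)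
    _ ≤ (Xs i).ncard + (⋃ j ∈ Finset.Ioi i, Xs j ∩ (Ls i).points).ncard :=
      Set.ncard_union_le _ _
    _ ≤ d i + (s - 1 - i) := add_le_add (hX.card_eq i).le hlater

end IsKConfig

theorem kconfig_tail_consecutive_general {K : Type} [Field K] {s : ℕ} (hs : 0 < s)
    {X : Set (P2 K)} {d : Fin s → ℕ} {Xs : Fin s → Set (P2 K)} {Ls : Fin s → ProjLine K}
    (hX : IsKConfig X d Xs Ls) {i : Fin s}
    (hi : d ⟨s - 1, Nat.sub_lt hs Nat.one_pos⟩ ≤ (X ∩ (Ls i).points).ncard)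
    (j : Fin s) (hij : i ≤ j) :
    (d j : ℤ) = d ⟨s - 1, Nat.sub_lt hs Nat.one_pos⟩ - s + (j.1 + 1) := by
  have hle_last : j ≤ ⟨s - 1, Nat.sub_lt hs Nat.one_pos⟩ := Nat.le_sub_one_of_lt j.isLt
  have htail : d j + (s - 1 - j) = d ⟨s - 1, Nat.sub_lt hs Nat.one_pos⟩ :=
    add_sub_eq_of_strictMono_of_le hX.strictMono hij hle_last
      (hi.trans (hX.ncard_inter_points_le i))
  omega

/-- **Lemma (necessary conditions), part (ii).** If `X` is a k-configuration of
type `(d₁,…,d_s)` and the defining line `L_i` contains exactly `d_s` points of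
`X`, then `d_j = d_s − s + j` for all `j = i,…,s`. -/
theorem kconfig_tail_consecutive {K : Type} [Field K] [IsAlgClosed K] {s : ℕ} (hs : 0 < s)
    (X : Set (P2 K)) (d : Fin s → ℕ) (Xs : Fin s → Set (P2 K)) (Ls : Fin s → ProjLine K)
    (hX : IsKConfig X d Xs Ls)
    (ds : ℕ) (hds : ds = d ⟨s - 1, Nat.sub_lt hs Nat.one_pos⟩)
    (i : Fin s) (hi : (X ∩ (Ls i).points).ncard = ds) :
    ∀ j : Fin s, i ≤ j → (d j : ℤ) = (ds : ℤ) - s + (j.1 + 1) := by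
  subst hds
  exact kconfig_tail_consecutive_general hs hX hi.ge
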